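/- Let X be a metric space equipped with Carathéodory's construction from an admissible gauge ζ on the Borel sets, producing the measure ψ, and let λ be the doubling constant of ζ. For each n ∈ ℕ let μ_n be a Borel measure on X, and let r_n be positive numbers with r_n → 0. Assume there exist an open set Ω ⊂ X, a set Θ ⊂ X with ψ(Θ) = 0, and a ψ-measurable function g : Ω → [0,∞] such that Ω \ Θ ⊂ { x ∈ X : liminf_{n→∞} ( sup_{0<ρ<r_n} μ_n(B_ρ(x))/ζ(B_ρ(x)) ) ≥ g(x) }. Then λ · liminf_{n→∞} μ_n(Ω) ≥ ∫_Ω g dψ. -/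

import Mathlib

open MeasureTheory Metric Filter Set
open scoped ENNReal Topology

/-- The approximating measure `φ_δ` of Carathéodory's construction from the gauge `ζ`
and the family of all Borel subsets. -/
noncomputable def caraPre {X : Type*} [MetricSpace X] [MeasurableSpace X]
    (ζ : Set X → ℝ≥0∞) (δ : ℝ) (A : Set X) : ℝ≥0∞ :=
  ⨅ (G : Set (Set X)) (_ : G.Countable) (_ : ∀ S ∈ G, MeasurableSet S)
    (_ : ∀ S ∈ G, EMetric.diam S ≤ ENNReal.ofReal δ) (_ : A ⊆ ⋃₀ G),
    ∑' S : G, ζ S.1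

/-- The resulting measure `ψ = sup_{δ>0} φ_δ` of Carathéodory's construction. -/
noncomputable def caraMeas {X : Type*} [MetricSpace X] [MeasurableSpace X]
    (ζ : Set X → ℝ≥0∞) (A : Set X) : ℝ≥0∞ :=
  ⨆ (δ : ℝ) (_ : 0 < δ), caraPre ζ δ A

/-!
The differentiation step is Vitali's covering theorem. If every `x ∈ A` is the centre of a small
ball `B ⊆ U` with `t ζ(B) < μ(B)`, then a disjoint subfamily of these balls, enlarged by the factor
`τ`, covers `A`. Doubling bounds the gauge of the enlarged balls by `lam` times that of the original
ones, so `t ψ(A) ≤ lam μ(U)`. Since the densities exceed `t` only eventually in `n`, one first works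
on the subsets of `A` where this happens uniformly and recovers `A` by continuity from below.

To pass from a constant `t` to a function `g`, approximate `g` from below by a simple function and
shrink its finitely many level sets to disjoint closed sets carrying almost all their mass. These
have disjoint open neighbourhoods in `Ω`, and `U ↦ lam * liminf μ n U` is superadditive on those.
-/

section Superadditive

theorem add_liminf_le_liminf_add {ι : Type*} {l : Filter ι} (u v : ι → ℝ≥0∞) :
    liminf u l + liminf v l ≤ liminf (fun i => u i + v i) l := by
  rw [liminf_eq_iSup_iInf (u := u), liminf_eq_iSup_iInf (u := v)]
  refine ENNReal.biSup_add_biSup_le' ⟨univ, univ_mem⟩ ⟨univ, univ_mem⟩ fun S hS T hT => ?_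
  refine le_liminf_of_le (by isBoundedDefault) ?_
  filter_upwards [hS, hT] with i hiS hiT
  exact add_le_add (iInf₂_le i hiS) (iInf₂_le i hiT)

variable {X : Type*} [TopologicalSpace X]

/-- Superadditivity of a set function on disjoint open sets, combined with monotonicity (the case
`V = ∅`). Only the values of `ν` on open sets matter. -/
def IsSuperadditiveOnOpens (ν : Set X → ℝ≥0∞) : Prop :=
  ∀ ⦃U V W : Set X⦄, IsOpen U → IsOpen V → IsOpen W → Disjoint U V → U ∪ V ⊆ W → ν U + ν V ≤ ν W

theorem isSuperadditiveOnOpens_measure [MeasurableSpace X] [OpensMeasurableSpace X]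
    (μ : Measure X) : IsSuperadditiveOnOpens (fun U => μ U) :=
  fun _ _ _ _ hV _ hUV hW => (measure_union hUV hV.measurableSet).symm.trans_le (measure_mono hW)

namespace IsSuperadditiveOnOpens

theorem const_mul {ν : Set X → ℝ≥0∞} (hν : IsSuperadditiveOnOpens ν) (c : ℝ≥0∞) :
    IsSuperadditiveOnOpens (fun U => c * ν U) := by
  intro U V W hU hV hW hUV hsub
  simpa only [← mul_add] using mul_le_mul_right (hν hU hV hW hUV hsub) c

theorem liminf {ι : Type*} {l : Filter ι} {ν : ι → Set X → ℝ≥0∞}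
    (hν : ∀ i, IsSuperadditiveOnOpens (ν i)) :
    IsSuperadditiveOnOpens (fun U => Filter.liminf (fun i => ν i U) l) :=
  fun _ _ _ hU hV hW hUV hsub => (add_liminf_le_liminf_add _ _).trans <|
    liminf_le_liminf <| .of_forall fun i => hν i hU hV hW hUV hsub

theorem sum_le {ν : Set X → ℝ≥0∞} (hν : IsSuperadditiveOnOpens ν) {ι : Type*} (s : Finset ι)
    {V : ι → Set X} (hV : ∀ i ∈ s, IsOpen (V i)) (hdisj : (s : Set ι).PairwiseDisjoint V)
    {W : Set X} (hW : IsOpen W) (hVW : ∀ i ∈ s, V i ⊆ W) : ∑ i ∈ s, ν (V i) ≤ ν W := by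
  classical
  induction s using Finset.induction_on generalizing W with
  | empty => simp
  | insert a s ha ih =>
    simp only [Finset.forall_mem_insert] at hV hVW
    rw [Finset.coe_insert, pairwiseDisjoint_insert_of_notMem (by simpa using ha)] at hdisj
    have hopen : IsOpen (⋃ i ∈ s, V i) := isOpen_biUnion hV.2
    have hsum : ∑ i ∈ s, ν (V i) ≤ ν (⋃ i ∈ s, V i) :=
      ih hV.2 hdisj.1 hopen fun i hi => subset_biUnion_of_mem (u := V) hi
    have hdisj_a : Disjoint (V a) (⋃ i ∈ s, V i) := disjoint_iUnion₂_right.2 hdisj.2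
    calc ∑ i ∈ insert a s, ν (V i) = ν (V a) + ∑ i ∈ s, ν (V i) := Finset.sum_insert ha
      _ ≤ ν (V a) + ν (⋃ i ∈ s, V i) := by gcongr
      _ ≤ ν W := hν hV.1 hopen hW hdisj_a (union_subset hVW.1 (iUnion₂_subset hVW.2))

end IsSuperadditiveOnOpens

theorem exists_isOpen_superset_pairwiseDisjoint [NormalSpace X] {ι : Type*} {s : Set ι}
    (hs : s.Finite) {K : ι → Set X} (hK : ∀ i ∈ s, IsClosed (K i)) (hdisj : s.PairwiseDisjoint K) :
    ∃ V : ι → Set X, (∀ i, IsOpen (V i) ∧ K i ⊆ V i) ∧ s.PairwiseDisjoint V :=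
  Set.PairwiseDisjoint.exists_mem_filter_basis (l := fun i => 𝓝ˢ (K i))
    (fun _ hi _ hj hij => disjoint_nhdsSet_nhdsSet (hK _ hi) (hK _ hj) (hdisj hi hj hij))
    hs fun i => hasBasis_nhdsSet (K i)

end Superadditive

section Localization

variable {X : Type*} [TopologicalSpace X] [TopologicalSpace.PseudoMetrizableSpace X]
  [MeasurableSpace X] [BorelSpace X]

theorem exists_isClosed_subset_mul_measure_le (ψ : Measure X) {A : Set X} (hA : MeasurableSet A)
    (hfin : ψ A ≠ ⊤) {θ : ℝ≥0∞} (hθ : θ < 1) :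
    ∃ K, IsClosed K ∧ K ⊆ A ∧ θ * ψ A ≤ ψ K := by
  rcases eq_or_ne (ψ A) 0 with h0 | h0
  · exact ⟨∅, isClosed_empty, empty_subset A, by simp [h0]⟩
  have : IsFiniteMeasure (ψ.restrict A) := isFiniteMeasure_restrict.2 hfin
  have hlt : θ * ψ A < ψ.restrict A A := by
    simpa using ENNReal.mul_lt_mul_left h0 hfin hθ
  obtain ⟨K, hKA, hK, hθK⟩ := hA.exists_lt_isClosed_of_ne_top (measure_ne_top _ _) hlt
  exact ⟨K, hK, hKA, hθK.le.trans (Measure.restrict_apply_le A K)⟩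

theorem sum_measure_le_of_isSuperadditiveOnOpens {ν : Set X → ℝ≥0∞}
    (hν : IsSuperadditiveOnOpens ν) {Ω : Set X} (hΩ : IsOpen Ω) {ι : Type*} (s : Finset ι)
    (κ : ι → Measure X) {A : ι → Set X} (hA : ∀ i ∈ s, MeasurableSet (A i))
    (hAΩ : ∀ i ∈ s, A i ⊆ Ω) (hdisj : (s : Set ι).PairwiseDisjoint A)
    (hle : ∀ i ∈ s, ∀ U K : Set X, IsOpen U → U ⊆ Ω → K ⊆ U → K ⊆ A i → κ i K ≤ ν U) :
    ∑ i ∈ s, κ i (A i) ≤ ν Ω := by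
  rcases eq_or_ne (ν Ω) ⊤ with htop | htop
  · exact htop ▸ le_top
  have hfin : ∀ i ∈ s, κ i (A i) ≠ ⊤ := fun i hi =>
    ne_top_of_le_ne_top htop (hle i hi Ω (A i) hΩ subset_rfl (hAΩ i hi) subset_rfl)
  refine ENNReal.le_of_forall_lt_one_mul_le fun θ hθ => ?_
  choose! K hKclosed hKA hθK using fun i hi =>
    exists_isClosed_subset_mul_measure_le (κ i) (hA i hi) (hfin i hi) hθ
  have hKdisj : (s : Set ι).PairwiseDisjoint K := fun i hi j hj hij =>
    (hdisj hi hj hij).mono (hKA i hi) (hKA j hj)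
  obtain ⟨V, hV, hVdisj⟩ :=
    exists_isOpen_superset_pairwiseDisjoint s.finite_toSet hKclosed hKdisj
  have hVΩ : ∀ i ∈ s, IsOpen (V i ∩ Ω) := fun i _ => (hV i).1.inter hΩ
  calc θ * ∑ i ∈ s, κ i (A i) = ∑ i ∈ s, θ * κ i (A i) := Finset.mul_sum ..
    _ ≤ ∑ i ∈ s, κ i (K i) := Finset.sum_le_sum hθK
    _ ≤ ∑ i ∈ s, ν (V i ∩ Ω) := Finset.sum_le_sum fun i hi =>
        hle i hi _ _ (hVΩ i hi) inter_subset_right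
          (subset_inter (hV i).2 ((hKA i hi).trans (hAΩ i hi))) (hKA i hi)
    _ ≤ ν Ω := hν.sum_le s hVΩ (hVdisj.mono fun i => inter_subset_left) hΩ
        fun i _ => inter_subset_right

theorem setLIntegral_le_of_isSuperadditiveOnOpens (ψ : Measure X) {ν : Set X → ℝ≥0∞}
    (hν : IsSuperadditiveOnOpens ν) {Ω : Set X} (hΩ : IsOpen Ω) {g : X → ℝ≥0∞}
    (hle : ∀ (U A : Set X) (c : ℝ≥0∞), IsOpen U → U ⊆ Ω → A ⊆ U → (∀ x ∈ A, c ≤ g x) →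
      c * ψ A ≤ ν U) :
    ∫⁻ x in Ω, g x ∂ψ ≤ ν Ω := by
  rw [lintegral]
  refine iSup₂_le fun s hsg => ?_
  have hlevel : ∀ c, MeasurableSet (s ⁻¹' {c}) := fun c => s.measurableSet_preimage _
  calc s.lintegral (ψ.restrict Ω) = ∑ c ∈ s.range, (c • ψ) (s ⁻¹' {c} ∩ Ω) := by
        simp [SimpleFunc.lintegral, Measure.restrict_apply (hlevel _)]
    _ ≤ ν Ω := by
        refine sum_measure_le_of_isSuperadditiveOnOpens hν hΩ s.range (fun c => c • ψ)
          (fun c _ => (hlevel c).inter hΩ.measurableSet) (fun c _ => inter_subset_right)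
          (fun c _ d _ hcd => (pairwise_disjoint_fiber s hcd).mono inter_subset_left
            inter_subset_left) fun c _ U K hU hUΩ hKU hK => ?_
        refine hle U K c hU hUΩ hKU fun x hx => ?_
        have hsx : s x = c := (hK hx).1
        exact hsx ▸ hsg x

end Localization

theorem measure_le_of_forall_eventually_uniform {X ι : Type*} [MeasurableSpace X] (ψ : Measure X)
    {l : Filter ι} [l.IsCountablyGenerated] {p : ι → X → Prop} {A : Set X} {b : ℝ≥0∞}
    (hp : ∀ x ∈ A, ∀ᶠ i in l, p i x)
    (hle : ∀ B ⊆ A, (∀ᶠ i in l, ∀ x ∈ B, p i x) → ψ B ≤ b) : ψ A ≤ b := by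
  obtain ⟨S, hS⟩ := l.exists_antitone_basis
  let B : ℕ → Set X := fun k => {x ∈ A | ∀ i ∈ S k, p i x}
  have hB : Monotone B := fun j k hjk x hx => ⟨hx.1, fun i hi => hx.2 i (hS.antitone hjk hi)⟩
  have hAB : A ⊆ ⋃ k, B k := fun x hx => by
    obtain ⟨k, hk⟩ := hS.eventually_iff.1 (hp x hx)
    exact mem_iUnion.2 ⟨k, hx, fun i hi => hk.2 hi⟩
  calc ψ A ≤ ψ (⋃ k, B k) := measure_mono hAB
    _ = ⨆ k, ψ (B k) := hB.measure_iUnion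
    _ ≤ b := iSup_le fun k => hle (B k) (fun x hx => hx.1) <|
        mem_of_superset (hS.mem k) fun i hi x hx => hx.2 i hi

theorem countable_of_pairwise_disjoint_of_measure_ne_zero {X ι : Type*} [MeasurableSpace X]
    (μ : Measure X) {B : ι → Set X} (hB : ∀ i, MeasurableSet (B i))
    (hdisj : Pairwise (Function.onFun Disjoint B)) (hfin : μ (⋃ i, B i) ≠ ⊤)
    (hpos : ∀ i, μ (B i) ≠ 0) : Countable ι := by
  have hcount := Measure.countable_meas_pos_of_disjoint_of_meas_iUnion_ne_top μ hB hdisj hfin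
  simpa only [pos_iff_ne_zero, hpos, not_false_eq_true, ne_eq, ofPred_true, countable_univ_iff]
    using hcount

theorem ediam_closedBall_le_ofReal {X : Type*} [PseudoMetricSpace X] (x : X) {R δ : ℝ}
    (hR : 2 * R ≤ δ) : ediam (closedBall x R) ≤ ENNReal.ofReal δ :=
  ediam_le_of_forall_dist_le fun y hy z hz => by
    linarith [dist_triangle_right y z x, mem_closedBall.1 hy, mem_closedBall.1 hz]

section Gauge

variable {X : Type*} [MetricSpace X] [MeasurableSpace X]

/-- The upper density `sup_{0 < ρ < r} μ(B_ρ(x)) / ζ(B_ρ(x))` of `μ` relative to the gauge `ζ` at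
scales below `r`. It is `0` if `r ≤ 0`, and quotients are taken in `ℝ≥0∞`, where `0 / 0 = 0`. -/
noncomputable def supDensity (ζ : Set X → ℝ≥0∞) (μ : Measure X) (r : ℝ) (x : X) : ℝ≥0∞ :=
  ⨆ (ρ : ℝ) (_ : 0 < ρ) (_ : ρ < r), μ (closedBall x ρ) / ζ (closedBall x ρ)

/-- The doubling condition on a gauge `ζ` with enlargement factor `τ`, doubling constant `lam` and
radii below `γ`; for `τ = 5` this is part (ii) of admissibility. -/
def IsDoublingGauge (ζ : Set X → ℝ≥0∞) (τ : ℝ) (lam γ : ℝ≥0∞) : Prop :=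
  ∀ (x : X) (R : ℝ), 0 < R → ENNReal.ofReal R < γ →
    ζ (closedBall x (τ * R)) ≤ lam * ζ (closedBall x R)

theorem caraPre_le_tsum (ζ : Set X → ℝ≥0∞) {δ : ℝ} {A : Set X} {ι : Type*} [Countable ι]
    {S : ι → Set X} (hS : ∀ i, MeasurableSet (S i))
    (hdiam : ∀ i, ediam (S i) ≤ ENNReal.ofReal δ) (hA : A ⊆ ⋃ i, S i) :
    caraPre ζ δ A ≤ ∑' i, ζ (S i) := by
  calc caraPre ζ δ A ≤ ∑' T : range S, ζ T.1 :=
        iInf_le_of_le (range S) <| iInf_le_of_le (countable_range S) <|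
          iInf_le_of_le (forall_mem_range.2 hS) <| iInf_le_of_le (forall_mem_range.2 hdiam) <|
            iInf_le_of_le (by rwa [sUnion_range]) le_rfl
    _ ≤ ∑' i, ζ (S i) :=
        ENNReal.tsum_le_tsum_comp_of_surjective rangeFactorization_surjective
          (fun T : range S => ζ T.1)

theorem mul_gauge_closedBall_le {ζ : Set X → ℝ≥0∞} {τ : ℝ} {lam γ : ℝ≥0∞}
    (hζ : IsDoublingGauge ζ τ lam γ) {μ : Measure X} {t : ℝ≥0∞} {x : X} {R : ℝ} (hR : 0 < R)
    (hRγ : ENNReal.ofReal R < γ) (ht : t ≤ μ (closedBall x R) / ζ (closedBall x R)) :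
    t * ζ (closedBall x (τ * R)) ≤ lam * μ (closedBall x R) :=
  calc t * ζ (closedBall x (τ * R)) ≤ t * (lam * ζ (closedBall x R)) := by
        gcongr
        exact hζ x R hR hRγ
    _ = lam * (t * ζ (closedBall x R)) := mul_left_comm ..
    _ ≤ lam * μ (closedBall x R) := by
        gcongr
        exact ENNReal.mul_le_of_le_div ht

variable [OpensMeasurableSpace X]

theorem mul_caraPre_le_of_lt_supDensity {ζ : Set X → ℝ≥0∞} {τ : ℝ} (hτ : 3 < τ)
    {lam γ : ℝ≥0∞} (hlam : 0 < lam) (hζ : IsDoublingGauge ζ τ lam γ) {μ : Measure X} {r δ : ℝ}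
    (hrγ : ENNReal.ofReal r ≤ γ) (hrδ : 2 * (τ * r) ≤ δ) {U A : Set X} {t : ℝ≥0∞}
    (hA : ∀ x ∈ A, closedBall x r ⊆ U ∧ t < supDensity ζ μ r x) :
    t * caraPre ζ δ A ≤ lam * μ U := by
  rcases eq_or_ne (μ U) ⊤ with hU | hU
  · simp [hU, hlam.ne']
  have hradius : ∀ x ∈ A, ∃ ρ, 0 < ρ ∧ ρ < r ∧ t < μ (closedBall x ρ) / ζ (closedBall x ρ) :=
    fun x hx => by simpa only [supDensity, lt_iSup_iff, exists_prop] using (hA x hx).2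
  choose! ρ hρ0 hρr hρ using hradius
  obtain ⟨u, huA, hudisj, hcover⟩ :=
    Vitali.exists_disjoint_subfamily_covering_enlargement_closedBall A id ρ r
      (fun x hx => (hρr x hx).le) τ hτ
  let B : u → Set X := fun x => closedBall x (ρ x)
  have hBmeas : ∀ x, MeasurableSet (B x) := fun x => isClosed_closedBall.measurableSet
  have hBdisj : Pairwise (Function.onFun Disjoint B) := hudisj.subtype _ _
  have hBU : ⋃ x, B x ⊆ U := iUnion_subset fun x =>
    (closedBall_subset_closedBall (hρr x (huA x.2)).le).trans (hA x (huA x.2)).1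
  have hBpos : ∀ x, μ (B x) ≠ 0 := fun x h0 => by
    simpa only [B, h0, ENNReal.zero_div, not_lt_zero] using hρ x (huA x.2)
  have : Countable u := countable_of_pairwise_disjoint_of_measure_ne_zero μ hBmeas hBdisj
    (ne_top_of_le_ne_top hU (measure_mono hBU)) hBpos
  have hcaraPre : caraPre ζ δ A ≤ ∑' x : u, ζ (closedBall x (τ * ρ x)) := by
    refine caraPre_le_tsum ζ (fun x => isClosed_closedBall.measurableSet)
      (fun x => ediam_closedBall_le_ofReal _ ?_) fun x hx => ?_
    · nlinarith [hρr x (huA x.2)]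
    · obtain ⟨y, hy, hsub⟩ := hcover x hx
      exact mem_iUnion.2 ⟨⟨y, hy⟩, hsub (mem_closedBall_self (hρ0 x hx).le)⟩
  have hball : ∀ x : u, t * ζ (closedBall x (τ * ρ x)) ≤ lam * μ (B x) := fun x =>
    have hr : 0 < r := (hρ0 x (huA x.2)).trans (hρr x (huA x.2))
    mul_gauge_closedBall_le hζ (hρ0 x (huA x.2))
      (((ENNReal.ofReal_lt_ofReal_iff hr).2 (hρr x (huA x.2))).trans_le hrγ) (hρ x (huA x.2)).le
  calc t * caraPre ζ δ A ≤ t * ∑' x : u, ζ (closedBall x (τ * ρ x)) := by gcongr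
    _ = ∑' x : u, t * ζ (closedBall x (τ * ρ x)) := ENNReal.tsum_mul_left.symm
    _ ≤ ∑' x : u, lam * μ (B x) := ENNReal.tsum_le_tsum hball
    _ = lam * ∑' x, μ (B x) := ENNReal.tsum_mul_left
    _ ≤ lam * μ U := by
        gcongr
        exact (tsum_meas_le_meas_iUnion_of_disjoint μ hBmeas hBdisj).trans (measure_mono hBU)

variable {ι : Type*} {l : Filter ι} {ζ : Set X → ℝ≥0∞} {τ : ℝ} {lam γ : ℝ≥0∞} {μ : ι → Measure X}
  {r : ι → ℝ} {U A : Set X}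

theorem mul_caraMeas_le_liminf_of_eventually_uniform (hτ : 3 < τ) (hγ : 0 < γ) (hlam : 0 < lam)
    (hlamtop : lam ≠ ⊤) (hζ : IsDoublingGauge ζ τ lam γ) (hr : Tendsto r l (𝓝 0))
    {t : ℝ≥0∞}
    (hA : ∀ᶠ i in l, ∀ x ∈ A, closedBall x (r i) ⊆ U ∧ t < supDensity ζ (μ i) (r i) x) :
    t * caraMeas ζ A ≤ lam * liminf (fun i => μ i U) l := by
  simp only [caraMeas, ENNReal.mul_iSup]
  refine iSup₂_le fun δ hδ => ?_
  rw [← ENNReal.div_le_iff' hlam.ne' hlamtop]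
  have hrγ : ∀ᶠ i in l, ENNReal.ofReal (r i) < γ :=
    (ENNReal.tendsto_ofReal hr).eventually_lt_const (by simpa using hγ)
  have hrδ : ∀ᶠ i in l, 2 * (τ * r i) < δ :=
    ((hr.const_mul τ).const_mul 2).eventually_lt_const (by simpa using hδ)
  refine le_liminf_of_le (by isBoundedDefault) ?_
  filter_upwards [hrγ, hrδ, hA] with i hiγ hiδ hiA
  exact ENNReal.div_le_of_le_mul' <|
    mul_caraPre_le_of_lt_supDensity hτ hlam hζ hiγ.le hiδ.le hiA

theorem mul_measure_le_liminf_of_le_liminf_supDensity (hτ : 3 < τ) (hγ : 0 < γ) (hlam : 0 < lam)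
    (hlamtop : lam ≠ ⊤) (hζ : IsDoublingGauge ζ τ lam γ) {ψ : Measure X}
    (hψ : ∀ A : Set X, ψ A = caraMeas ζ A) [l.IsCountablyGenerated]
    (hr : Tendsto r l (𝓝 0)) (hU : IsOpen U) (hAU : A ⊆ U) {c : ℝ≥0∞}
    (hA : ∀ x ∈ A, c ≤ liminf (fun i => supDensity ζ (μ i) (r i) x) l) :
    c * ψ A ≤ lam * liminf (fun i => μ i U) l := by
  refine ENNReal.mul_le_of_forall_lt fun t ht b hb => ?_
  grw [hb]
  refine measure_le_of_forall_eventually_uniform (t • ψ) (l := l)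
    (p := fun i x => closedBall x (r i) ⊆ U ∧ t < supDensity ζ (μ i) (r i) x)
    (fun x hx => ?_) fun B _ hB => ?_
  · obtain ⟨ε, hε, hball⟩ := Metric.isOpen_iff.1 hU x (hAU hx)
    filter_upwards [hr.eventually_lt_const hε,
      eventually_lt_of_lt_liminf (ht.trans_le (hA x hx))] with i hiε hit
    exact ⟨(closedBall_subset_ball hiε).trans hball, hit⟩
  · rw [Measure.smul_apply, smul_eq_mul, hψ]
    exact mul_caraMeas_le_liminf_of_eventually_uniform hτ hγ hlam hlamtop hζ hr hB

end Gauge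

theorem statement5_general {X : Type*} [MetricSpace X] [MeasurableSpace X] [BorelSpace X]
    {ζ : Set X → ℝ≥0∞} {τ : ℝ} (hτ : 3 < τ) {γ lam : ℝ≥0∞} (hγ : 0 < γ) (hlam : 0 < lam)
    (hlamtop : lam ≠ ⊤) (hζ : IsDoublingGauge ζ τ lam γ) {ψ : Measure X}
    (hψ : ∀ A : Set X, ψ A = caraMeas ζ A) {ι : Type*} {l : Filter ι}
    [l.IsCountablyGenerated] {μ : ι → Measure X} {r : ι → ℝ} (hr : Tendsto r l (𝓝 0))
    {Ω : Set X} (hΩ : IsOpen Ω) {Θ : Set X} (hΘ : caraMeas ζ Θ = 0) {g : X → ℝ≥0∞}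
    (hg : ∀ x ∈ Ω \ Θ, g x ≤ liminf (fun i => supDensity ζ (μ i) (r i) x) l) :
    ∫⁻ x in Ω, g x ∂ψ ≤ lam * liminf (fun i => μ i Ω) l := by
  have hν : IsSuperadditiveOnOpens (fun U => lam * liminf (fun i => μ i U) l) :=
    (IsSuperadditiveOnOpens.liminf fun i => isSuperadditiveOnOpens_measure (μ i)).const_mul lam
  refine setLIntegral_le_of_isSuperadditiveOnOpens ψ hν hΩ fun U A c hU hUΩ hAU hc => ?_
  rw [← measure_sdiff_null ((hψ Θ).trans hΘ)]
  exact mul_measure_le_liminf_of_le_liminf_supDensity hτ hγ hlam hlamtop hζ hψ hr hU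
    (sdiff_subset.trans hAU) fun x hx => (hc x hx.1).trans (hg x ⟨hUΩ (hAU hx.1), hx.2⟩)

/-- Density-type lemma with a measurable lower-bound function `g`:
`λ liminf μ_n(Ω) ≥ ∫_Ω g dψ`. Here `ψ` is a measure agreeing with Carathéodory's
construction from `ζ` on all sets. -/
theorem statement5 {X : Type*} [MetricSpace X] [MeasurableSpace X] [BorelSpace X]
    (ζ : Set X → ℝ≥0∞) (I γ lam : ℝ≥0∞) (hI : 0 < I) (hγ : 0 < γ)
    (hlam : 0 < lam) (hlamtop : lam ≠ ⊤)
    (hζfin : ∀ (x : X) (R : ℝ), 0 < R → ENNReal.ofReal R < I →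
      0 < ζ (closedBall x R) ∧ ζ (closedBall x R) < ⊤)
    (hζdbl : ∀ (x : X) (R : ℝ), 0 < R → ENNReal.ofReal R < γ →
      ζ (closedBall x (5 * R)) ≤ lam * ζ (closedBall x R))
    (ψ : Measure X) (hψ : ∀ A : Set X, ψ A = caraMeas ζ A)
    (μ : ℕ → Measure X)
    (r : ℕ → ℝ) (hr : ∀ n, 0 < r n) (hrlim : Tendsto r atTop (𝓝 0))
    (Ω : Set X) (hΩ : IsOpen Ω)
    (Θ : Set X) (hΘ : caraMeas ζ Θ = 0)
    (g : X → ℝ≥0∞) (hg : AEMeasurable g ψ)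
    (hsub : Ω \ Θ ⊆ {x : X | g x ≤ liminf (fun n =>
        ⨆ (ρ : ℝ) (_ : 0 < ρ) (_ : ρ < r n),
          μ n (closedBall x ρ) / ζ (closedBall x ρ)) atTop}) :
    ∫⁻ x in Ω, g x ∂ψ ≤ lam * liminf (fun n => μ n Ω) atTop :=
  statement5_general (by norm_num) hγ hlam hlamtop hζdbl hψ hrlim hΩ hΘ hsub
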